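/- Let c > 0 be a real number, let δ be a real number with 0 < δ < (5π/4)·c, and let n be a positive integer with n > 2c/π + (2/π²)·δ·log(4·e·π·c/δ). Let ψ be the n-th PSWF with band limit c, with ODE eigenvalue χ_n. Then χ_n > c² + (4/π)·δ·c. -/

import Mathlib

open Real

/-- `IsPSWF c n ψ χ lam` : `ψ` is the `n`-th prolate spheroidal wave function with
band limit `c`, ODE eigenvalue `χ` and integral eigenvalue `lam`. -/
def IsPSWF (c : ℝ) (n : ℕ) (ψ : ℝ → ℝ) (χ : ℝ) (lam : ℂ) : Prop :=
  ContinuousOn ψ (Set.Icc (-1) 1) ∧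
  (∀ x ∈ Set.Ioo (-1 : ℝ) 1, DifferentiableAt ℝ ψ x ∧ DifferentiableAt ℝ (deriv ψ) x) ∧
  (∀ x ∈ Set.Ioo (-1 : ℝ) 1,
    (1 - x ^ 2) * deriv (deriv ψ) x - 2 * x * deriv ψ x + (χ - c ^ 2 * x ^ 2) * ψ x = 0) ∧
  {x | x ∈ Set.Ioo (-1 : ℝ) 1 ∧ ψ x = 0}.Finite ∧
  {x | x ∈ Set.Ioo (-1 : ℝ) 1 ∧ ψ x = 0}.ncard = n ∧
  (∫ t in (-1 : ℝ)..1, (ψ t) ^ 2) = 1 ∧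
  ∀ x ∈ Set.Icc (-1 : ℝ) 1,
    lam * (ψ x : ℂ) =
      ∫ t in (-1 : ℝ)..1, (ψ t : ℂ) * Complex.exp (Complex.I * (c : ℂ) * (x : ℂ) * (t : ℂ))

/-!
Suppose `χ ≤ X := c² (1 + s)` with `s = 4δ / (πc)`. Write `w = (1 - x²) ψ'` for the flux of `ψ` and
`S = √((1 - x²)(X - c² x²))`. For a suitable shift `K`, the modified Prüfer angle
`arctan (K - S ψ / w)` plus the WKB phase `∫₀ˣ √((X - c² t²) / (1 - t²)) dt` is nondecreasing
wherever `w ≠ 0`. Each zero of `ψ` lies strictly between two consecutive zeros of the flux, and the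
`arctan` drops by `π` from one to the next, so the WKB phase grows by at least `π` in between. Since
`ψ` is bounded, the flux also vanishes at `±1`, so this includes the outermost zeros of `ψ`. Hence
`nπ` is at most the total phase `2c ∫₀^{π/2} √(s + sin² u) du`. For `s ≤ 5` this elliptic integral
is at most `1 + s/4 + (s/4) log (16/s)`, which contradicts the lower bound on `n`.
-/

open Set Filter Topology

/-! ### Limits, zeros and Prüfer angles -/

theorem eq_zero_of_tendsto_sub_mul_deriv {f f' : ℝ → ℝ} {b L l : ℝ}
    (hf : ∀ᶠ x in 𝓝[<] b, HasDerivAt f (f' x) x) (hL : Tendsto f (𝓝[<] b) (𝓝 L))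
    (hl : Tendsto (fun x => (b - x) * f' x) (𝓝[<] b) (𝓝 l)) : l = 0 := by
  have hsub : Tendsto (fun x => b - x) (𝓝[<] b) (𝓝 0) :=
    tendsto_nhdsWithin_of_tendsto_nhds
      ((continuous_const.sub continuous_id).tendsto' b 0 (sub_self b))
  have hfL : Tendsto (fun x => f x - L) (𝓝[<] b) (𝓝 0) := by simpa using hL.sub_const L
  have hquot : Tendsto (fun x => (b - x) * (f x - L) / (b - x)) (𝓝[<] b) (𝓝 (-l)) := by
    refine HasDerivAt.lhopital_zero_nhdsLT
      (f' := fun x => -1 * (f x - L) + (b - x) * f' x) (g' := fun _ => -1)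
      ?_ (.of_forall fun x => (hasDerivAt_id x).const_sub b) (.of_forall fun _ => by norm_num)
      (by simpa using hsub.mul hfL) hsub ?_
    · filter_upwards [hf] with x hx
      exact ((hasDerivAt_id x).const_sub b).mul (hx.sub_const L)
    · simpa [div_neg] using ((hfL.const_mul (-1)).add hl).div_const (-1)
  have hquot' : Tendsto (fun x => (b - x) * (f x - L) / (b - x)) (𝓝[<] b) (𝓝 0) := by
    refine hfL.congr' ?_
    filter_upwards [self_mem_nhdsWithin] with x hx
    exact (mul_div_cancel_left₀ _ (sub_pos.2 hx).ne').symm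
  simpa using tendsto_nhds_unique hquot hquot'

theorem exists_tendsto_nhdsLT_of_abs_hasDerivAt_le {f f' : ℝ → ℝ} {a b C : ℝ} (hab : a < b)
    (hf : ∀ x ∈ Ioo a b, HasDerivAt f (f' x) x) (hC : ∀ x ∈ Ioo a b, |f' x| ≤ C) :
    ∃ l, Tendsto f (𝓝[<] b) (𝓝 l) := by
  have hlip : LipschitzOnWith C.toNNReal f (Ioo a b) :=
    (convex_Ioo a b).lipschitzOnWith_of_nnnorm_hasDerivWithin_le
      (fun x hx => (hf x hx).hasDerivWithinAt)
      (fun x hx => NNReal.le_toNNReal_of_coe_le (hC x hx))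
  obtain ⟨g, hg, hfg⟩ := hlip.extend_real
  refine ⟨g b, (tendsto_nhdsWithin_of_tendsto_nhds hg.continuous.continuousAt).congr' ?_⟩
  filter_upwards [Ioo_mem_nhdsLT hab] with x hx using (hfg hx).symm

theorem eqOn_zero_of_hasDerivAt_mul {A B u v : ℝ → ℝ} {a b x₀ : ℝ}
    (hA : ContinuousOn A (Ioo a b)) (hB : ContinuousOn B (Ioo a b))
    (hu : ∀ x ∈ Ioo a b, HasDerivAt u (A x * v x) x)
    (hv : ∀ x ∈ Ioo a b, HasDerivAt v (B x * u x) x)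
    (hx₀ : x₀ ∈ Ioo a b) (hu₀ : u x₀ = 0) (hv₀ : v x₀ = 0) : EqOn u 0 (Ioo a b) := by
  intro x hx
  obtain ⟨a', ha', ha'x⟩ := exists_between (lt_min hx.1 hx₀.1)
  obtain ⟨b', hb'x, hb'⟩ := exists_between (max_lt hx.2 hx₀.2)
  have hsub : Icc a' b' ⊆ Ioo a b := Icc_subset_Ioo ha' hb'
  obtain ⟨K, hK⟩ := isCompact_Icc.exists_bound_of_continuousOn ((hA.prodMk hB).mono hsub)
  have hlip : ∀ t ∈ Ioo a' b', LipschitzOnWith K.toNNReal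
      (fun y : ℝ × ℝ => (A t * y.2, B t * y.1)) univ := by
    intro t ht
    have hKt := hK t (Ioo_subset_Icc_self ht)
    refine LipschitzOnWith.of_dist_le_mul fun y _ z _ => ?_
    have hK0 : 0 ≤ K := (norm_nonneg _).trans hKt
    rw [Real.coe_toNNReal K hK0, Prod.dist_eq, Prod.dist_eq, Real.dist_eq, Real.dist_eq,
      ← mul_sub, ← mul_sub, abs_mul, abs_mul]
    exact max_le
      (mul_le_mul ((norm_fst_le _).trans hKt) (le_max_right _ _) (abs_nonneg _) hK0)
      (mul_le_mul ((norm_snd_le _).trans hKt) (le_max_left _ _) (abs_nonneg _) hK0)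
  have hzero := ODE_solution_unique_of_mem_Ioo (f := fun t => (u t, v t))
    (g := fun _ => (0, 0)) hlip
    ⟨ha'x.trans_le (min_le_right _ _), (le_max_right _ _).trans_lt hb'x⟩
    (fun t ht => ⟨(hu t (hsub (Ioo_subset_Icc_self ht))).prodMk
      (hv t (hsub (Ioo_subset_Icc_self ht))), mem_univ _⟩)
    (fun t _ => ⟨(hasDerivAt_const t _).congr_deriv (by ext <;> simp), mem_univ _⟩)
    (by simp only [hu₀, hv₀])
  exact congrArg Prod.fst
    (hzero ⟨ha'x.trans_le (min_le_left _ _), (le_max_left _ _).trans_lt hb'x⟩)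

theorem exists_first_zero {f : ℝ → ℝ} {z e : ℝ} (hze : z ≤ e) (hf : ContinuousOn f (Icc z e))
    (hz : 0 < f z) (he : f e = 0) : ∃ b ∈ Ioc z e, f b = 0 ∧ ∀ x ∈ Ico z b, 0 < f x := by
  have hclosed : IsClosed (Icc z e ∩ f ⁻¹' {0}) :=
    hf.preimage_isClosed_of_isClosed isClosed_Icc isClosed_singleton
  obtain ⟨b, ⟨hb, hfb⟩, hmin⟩ := (isCompact_Icc.of_isClosed_subset hclosed
    inter_subset_left).exists_isLeast ⟨e, right_mem_Icc.2 hze, he⟩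
  have hzb : z < b := hb.1.lt_of_ne fun h => hz.ne' (h ▸ hfb)
  refine ⟨b, ⟨hzb, hb.2⟩, hfb, fun x hx => ?_⟩
  by_contra! hfx
  have hsub : Icc z x ⊆ Icc z e := Icc_subset_Icc_right (hx.2.le.trans hb.2)
  obtain ⟨y, hy, hfy⟩ := intermediate_value_Icc' hx.1 (hf.mono hsub) ⟨hfx, hz.le⟩
  exact (hmin ⟨hsub hy, hfy⟩).not_gt (hy.2.trans_lt hx.2)

theorem sum_sub_le_of_monotone {ι : Type*} [LinearOrder ι] {φ : ℝ → ℝ} (hφ : Monotone φ)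
    {A B : ι → ℝ} {lo : ℝ} (T : Finset ι) (hlo : ∀ t ∈ T, lo ≤ A t)
    (hsep : ∀ s ∈ T, ∀ t ∈ T, s < t → B s ≤ A t) {hi : ℝ} (hlohi : lo ≤ hi)
    (hhi : ∀ t ∈ T, B t ≤ hi) : ∑ t ∈ T, (φ (B t) - φ (A t)) ≤ φ hi - φ lo := by
  induction T using Finset.induction_on_max generalizing hi with
  | empty => simpa using hφ hlohi
  | insert m T hm ih =>
    simp only [Finset.forall_mem_insert] at hlo hsep hhi
    rw [Finset.sum_insert fun h => (hm m h).false]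
    have hT := ih hlo.2 (fun s hs => (hsep.2 s hs).2) hlo.1
      (fun s hs => (hsep.2 s hs).1 (hm s hs))
    linarith [hφ hhi.1]

theorem hasDerivAt_prufer_angle {ψ w S K φ : ℝ → ℝ} {x p q r S' k : ℝ} (hp : p ≠ 0) (hq : q ≠ 0)
    (hSpq : S x ^ 2 = p * q) (hS : HasDerivAt S S' x) (hKx : K x = -S' / (2 * q))
    (hK : HasDerivAt K k x) (hφ : HasDerivAt φ (S x / p) x) (hψ : HasDerivAt ψ (w x / p) x)
    (hw : HasDerivAt w (-(r * ψ x)) x) (hwx : w x ≠ 0) :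
    HasDerivAt (fun y => arctan (K y - S y * (ψ y / w y)) + φ y)
      ((k + S x / p * K x ^ 2 + S x * (q - r) * (ψ x / w x) ^ 2)
        / (1 + (K x - S x * (ψ x / w x)) ^ 2)) x := by
  refine ((hK.sub (hS.mul (hψ.div hw hwx))).arctan.add hφ).congr_deriv ?_
  have hS' : S' = -(2 * q) * K x := by rw [hKx]; field_simp
  have hq' : q = S x ^ 2 / p := by rw [hSpq]; field_simp
  simp only [Pi.div_apply, Pi.mul_apply, Pi.sub_apply]
  rw [hS', hq']
  field_simp
  ring

/-! ### Solutions of the prolate equation -/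

/-- `ψ` is continuous on `[-1, 1]` and solves the prolate equation with band limit `c` and
eigenvalue `χ` on `(-1, 1)`; continuity at `±1` is what selects the solutions regular there. -/
structure IsProlateSolution (c χ : ℝ) (ψ : ℝ → ℝ) : Prop where
  continuousOn : ContinuousOn ψ (Icc (-1) 1)
  differentiableAt : ∀ x ∈ Ioo (-1 : ℝ) 1, DifferentiableAt ℝ ψ x
  differentiableAt_deriv : ∀ x ∈ Ioo (-1 : ℝ) 1, DifferentiableAt ℝ (deriv ψ) x
  ode : ∀ x ∈ Ioo (-1 : ℝ) 1,
    (1 - x ^ 2) * deriv (deriv ψ) x - 2 * x * deriv ψ x + (χ - c ^ 2 * x ^ 2) * ψ x = 0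

/-- The momentum `(1 - x²) ψ'(x)` conjugate to `ψ` in the Sturm–Liouville form
`((1 - x²) ψ')' + (χ - c² x²) ψ = 0` of the prolate equation. -/
noncomputable def prolateFlux (ψ : ℝ → ℝ) (x : ℝ) : ℝ := (1 - x ^ 2) * deriv ψ x

theorem prolateFlux_one (ψ : ℝ → ℝ) : prolateFlux ψ 1 = 0 := by simp [prolateFlux]

theorem prolateFlux_neg (ψ : ℝ → ℝ) (x : ℝ) :
    prolateFlux (fun y => -ψ y) x = -prolateFlux ψ x := by
  simp [prolateFlux, deriv.fun_neg]

theorem prolateFlux_neg_comp_neg (ψ : ℝ → ℝ) (x : ℝ) :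
    prolateFlux (fun y => -ψ (-y)) x = prolateFlux ψ (-x) := by
  simp [prolateFlux, deriv.fun_neg, deriv_comp_neg]

theorem one_sub_sq_pos {x : ℝ} (hx : x ∈ Ioo (-1 : ℝ) 1) : 0 < 1 - x ^ 2 := by
  nlinarith [hx.1, hx.2]

theorem neg_mem_Ioo_neg_one_one {x : ℝ} (hx : x ∈ Ioo (-1 : ℝ) 1) : -x ∈ Ioo (-1 : ℝ) 1 :=
  ⟨neg_lt_neg hx.2, neg_lt.1 hx.1⟩

namespace IsProlateSolution

variable {c χ : ℝ} {ψ : ℝ → ℝ}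

theorem neg (h : IsProlateSolution c χ ψ) : IsProlateSolution c χ (fun x => -ψ x) where
  continuousOn := h.continuousOn.neg
  differentiableAt x hx := (h.differentiableAt x hx).neg
  differentiableAt_deriv x hx := by
    simpa only [deriv.fun_neg'] using (h.differentiableAt_deriv x hx).fun_neg
  ode x hx := by
    simp only [deriv.fun_neg']
    linear_combination -h.ode x hx

theorem neg_comp_neg (h : IsProlateSolution c χ ψ) :
    IsProlateSolution c χ (fun x => -ψ (-x)) := by
  have hderiv : deriv (fun x => -ψ (-x)) = fun x => deriv ψ (-x) := by
    funext x
    rw [deriv.fun_neg, deriv_comp_neg, neg_neg]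
  refine ⟨(h.continuousOn.comp continuousOn_neg fun x hx => ?_).neg, fun x hx => ?_,
    fun x hx => ?_, fun x hx => ?_⟩
  · exact ⟨neg_le_neg hx.2, neg_le.1 hx.1⟩
  · exact ((h.differentiableAt _ (neg_mem_Ioo_neg_one_one hx)).comp x differentiableAt_id.neg).neg
  · rw [hderiv]
    exact (h.differentiableAt_deriv _ (neg_mem_Ioo_neg_one_one hx)).comp x differentiableAt_id.neg
  · rw [hderiv, deriv_comp_neg]
    linear_combination -h.ode (-x) (neg_mem_Ioo_neg_one_one hx)

theorem hasDerivAt (h : IsProlateSolution c χ ψ) {x : ℝ} (hx : x ∈ Ioo (-1 : ℝ) 1) :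
    HasDerivAt ψ (prolateFlux ψ x / (1 - x ^ 2)) x := by
  rw [prolateFlux, mul_div_cancel_left₀ _ (one_sub_sq_pos hx).ne']
  exact (h.differentiableAt x hx).hasDerivAt

theorem hasDerivAt_flux (h : IsProlateSolution c χ ψ) {x : ℝ} (hx : x ∈ Ioo (-1 : ℝ) 1) :
    HasDerivAt (prolateFlux ψ) (-((χ - c ^ 2 * x ^ 2) * ψ x)) x := by
  refine (((hasDerivAt_pow 2 x).const_sub 1).mul
    (h.differentiableAt_deriv x hx).hasDerivAt).congr_deriv ?_
  linear_combination h.ode x hx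

theorem tendsto_nhdsLT_one (h : IsProlateSolution c χ ψ) : Tendsto ψ (𝓝[<] 1) (𝓝 (ψ 1)) := by
  rw [← nhdsWithin_Ioo_eq_nhdsLT (by norm_num : (-1 : ℝ) < 1)]
  exact (h.continuousOn 1 (by norm_num)).mono_left (nhdsWithin_mono _ Ioo_subset_Icc_self)

/-- A nonzero limit of the flux would make `ψ` diverge logarithmically. -/
theorem tendsto_flux_nhdsLT_one (h : IsProlateSolution c χ ψ) :
    Tendsto (prolateFlux ψ) (𝓝[<] 1) (𝓝 0) := by
  have hIoo : ∀ᶠ x in 𝓝[<] (1 : ℝ), x ∈ Ioo (-1 : ℝ) 1 := Ioo_mem_nhdsLT (by norm_num)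
  obtain ⟨C, hC⟩ := isCompact_Icc.exists_bound_of_continuousOn
    (f := fun x => -((χ - c ^ 2 * x ^ 2) * ψ x))
    ((ContinuousOn.mul (by fun_prop) h.continuousOn).neg)
  obtain ⟨l, hl⟩ := exists_tendsto_nhdsLT_of_abs_hasDerivAt_le (by norm_num : (-1 : ℝ) < 1)
    (fun x hx => h.hasDerivAt_flux hx) (fun x hx => hC x (Ioo_subset_Icc_self hx))
  have hsum : Tendsto (fun x : ℝ => 1 + x) (𝓝[<] 1) (𝓝 2) :=
    tendsto_nhdsWithin_of_tendsto_nhds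
      ((continuous_const.add continuous_id).tendsto' _ _ one_add_one_eq_two)
  have hlim : l / 2 = 0 := by
    refine eq_zero_of_tendsto_sub_mul_deriv (hIoo.mono fun x hx => h.hasDerivAt hx)
      h.tendsto_nhdsLT_one ((hl.div hsum two_ne_zero).congr' ?_)
    filter_upwards [hIoo] with x hx
    have h1 : 1 - x ≠ 0 := (sub_pos.2 hx.2).ne'
    have h2 : 1 + x ≠ 0 := by linarith [hx.1]
    rw [show 1 - x ^ 2 = (1 - x) * (1 + x) by ring, Pi.div_apply]
    field_simp
  rwa [show l = 0 by linarith] at hl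

theorem continuousWithinAt_flux_one (h : IsProlateSolution c χ ψ) :
    ContinuousWithinAt (prolateFlux ψ) (Iic 1) 1 := by
  rw [← continuousWithinAt_Iio_iff_Iic, ContinuousWithinAt, prolateFlux_one]
  exact h.tendsto_flux_nhdsLT_one

theorem continuousOn_flux (h : IsProlateSolution c χ ψ) :
    ContinuousOn (prolateFlux ψ) (Icc (-1) 1) := by
  intro x hx
  rcases hx.1.eq_or_lt with rfl | hx0
  · have hrefl := h.neg_comp_neg.continuousWithinAt_flux_one
    rw [funext (prolateFlux_neg_comp_neg ψ), ← neg_neg (1 : ℝ)] at hrefl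
    simpa [Function.comp_def] using hrefl.comp (f := Neg.neg) (s := Icc (-1) 1)
      continuousWithinAt_neg fun y hy => by simpa using neg_le.1 hy.1
  rcases hx.2.eq_or_lt with rfl | hx1
  · exact h.continuousWithinAt_flux_one.mono Icc_subset_Iic_self
  · exact (h.hasDerivAt_flux ⟨hx0, hx1⟩).continuousAt.continuousWithinAt

theorem flux_ne_zero_of_eq_zero (h : IsProlateSolution c χ ψ)
    (hne : ∃ x ∈ Ioo (-1 : ℝ) 1, ψ x ≠ 0) {z : ℝ} (hz : z ∈ Ioo (-1 : ℝ) 1) (hψz : ψ z = 0) :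
    prolateFlux ψ z ≠ 0 := by
  intro hw
  obtain ⟨x, hx, hψx⟩ := hne
  refine hψx (eqOn_zero_of_hasDerivAt_mul (A := fun x => (1 - x ^ 2)⁻¹)
    (B := fun x => -(χ - c ^ 2 * x ^ 2)) (v := prolateFlux ψ) ?_ (by fun_prop)
    (fun x hx => ?_) (fun x hx => ?_) hz hψz hw hx)
  · exact ContinuousOn.inv₀ (by fun_prop) fun x hx => (one_sub_sq_pos hx).ne'
  · simpa only [div_eq_inv_mul] using h.hasDerivAt hx
  · simpa only [neg_mul] using h.hasDerivAt_flux hx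

end IsProlateSolution

/-! ### The WKB phase -/

section WKB

variable {c X x : ℝ}

/-- `√((1 - x²)(X - c² x²))`, the scale on which `ψ` is compared with its flux in the
modified Prüfer angle. -/
noncomputable def wkbWeight (c X x : ℝ) : ℝ := √((1 - x ^ 2) * (X - c ^ 2 * x ^ 2))

/-- The WKB phase `∫₀ˣ √((X - c² t²) / (1 - t²)) dt` of the prolate equation with eigenvalue `X`,
written in the variable `t = sin u` so that the integrand stays continuous up to `x = ±1`. -/
noncomputable def wkbPhase (c X x : ℝ) : ℝ := ∫ u in (0 : ℝ)..arcsin x, √(X - c ^ 2 * sin u ^ 2)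

/-- The shift `-S' / (2 (X - c² x²))`, with `S` the WKB weight, of the tangent of the modified
Prüfer angle; it cancels the term linear in `ψ` in the derivative of that angle. -/
noncomputable def pruferShift (c X x : ℝ) : ℝ :=
  x * ((X - c ^ 2 * x ^ 2) + c ^ 2 * (1 - x ^ 2)) / (2 * (X - c ^ 2 * x ^ 2) * wkbWeight c X x)

theorem sub_mul_sq_pos (hX : c ^ 2 < X) (hx : x ∈ Icc (-1 : ℝ) 1) : 0 < X - c ^ 2 * x ^ 2 := by
  have hx2 : x ^ 2 ≤ 1 := by nlinarith [hx.1, hx.2]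
  nlinarith [sq_nonneg c]

theorem wkbWeight_pos (hX : c ^ 2 < X) (hx : x ∈ Ioo (-1 : ℝ) 1) : 0 < wkbWeight c X x :=
  sqrt_pos.2 (mul_pos (one_sub_sq_pos hx) (sub_mul_sq_pos hX (Ioo_subset_Icc_self hx)))

theorem wkbWeight_sq (hX : c ^ 2 < X) (hx : x ∈ Ioo (-1 : ℝ) 1) :
    wkbWeight c X x ^ 2 = (1 - x ^ 2) * (X - c ^ 2 * x ^ 2) :=
  sq_sqrt (mul_pos (one_sub_sq_pos hx) (sub_mul_sq_pos hX (Ioo_subset_Icc_self hx))).le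

theorem continuous_wkbWeight (c X : ℝ) : Continuous (wkbWeight c X) := by
  unfold wkbWeight
  fun_prop

theorem hasDerivAt_one_sub_sq (x : ℝ) : HasDerivAt (fun y : ℝ => 1 - y ^ 2) (-(2 * x)) x :=
  ((hasDerivAt_pow 2 x).const_sub 1).congr_deriv (by simp)

theorem hasDerivAt_sub_mul_sq (c X x : ℝ) :
    HasDerivAt (fun y : ℝ => X - c ^ 2 * y ^ 2) (-(c ^ 2 * (2 * x))) x :=
  (((hasDerivAt_pow 2 x).const_mul (c ^ 2)).const_sub X).congr_deriv (by simp)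

theorem hasDerivAt_wkbWeight (hX : c ^ 2 < X) (hx : x ∈ Ioo (-1 : ℝ) 1) :
    HasDerivAt (wkbWeight c X)
      (-(x * ((X - c ^ 2 * x ^ 2) + c ^ 2 * (1 - x ^ 2)) / wkbWeight c X x)) x := by
  have hprod := mul_pos (one_sub_sq_pos hx) (sub_mul_sq_pos hX (Ioo_subset_Icc_self hx))
  refine (((hasDerivAt_one_sub_sq x).fun_mul (hasDerivAt_sub_mul_sq c X x)).sqrt
    hprod.ne').congr_deriv ?_
  have hS := (wkbWeight_pos hX hx).ne'
  rw [← wkbWeight]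
  field_simp
  ring

theorem pruferShift_eq (c X x : ℝ) :
    pruferShift c X x =
      -(-(x * ((X - c ^ 2 * x ^ 2) + c ^ 2 * (1 - x ^ 2)) / wkbWeight c X x)) /
        (2 * (X - c ^ 2 * x ^ 2)) := by
  rw [pruferShift, neg_neg, div_div, mul_comm (wkbWeight c X x)]

theorem pruferShift_neg (c X x : ℝ) : pruferShift c X (-x) = -pruferShift c X x := by
  simp only [pruferShift, wkbWeight, neg_sq, neg_mul, neg_div]

theorem hasDerivAt_pruferShift (hX : c ^ 2 < X) (hx : x ∈ Ioo (-1 : ℝ) 1) :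
    HasDerivAt (pruferShift c X)
      ((((X - c ^ 2 * x ^ 2) + c ^ 2 * (1 - x ^ 2)) * ((1 - x ^ 2) * (X - c ^ 2 * x ^ 2))
        + 2 * (c ^ 2) ^ 2 * x ^ 2 * (1 - x ^ 2) ^ 2
        + x ^ 2 * ((X - c ^ 2 * x ^ 2) ^ 2 + (c ^ 2 * (1 - x ^ 2)) ^ 2))
        / (2 * (X - c ^ 2 * x ^ 2) * wkbWeight c X x ^ 3)) x := by
  have hq := (sub_mul_sq_pos hX (Ioo_subset_Icc_self hx)).ne'
  have hS := (wkbWeight_pos hX hx).ne'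
  have hS2 := wkbWeight_sq hX hx
  refine (((hasDerivAt_id x).mul ((hasDerivAt_sub_mul_sq c X x).add
    ((hasDerivAt_one_sub_sq x).const_mul (c ^ 2)))).div
    (((hasDerivAt_sub_mul_sq c X x).const_mul 2).mul (hasDerivAt_wkbWeight hX hx))
    (mul_ne_zero (mul_ne_zero two_ne_zero hq) hS)).congr_deriv ?_
  simp only [Pi.mul_apply, Pi.add_apply, id]
  generalize wkbWeight c X x = S at *
  generalize 1 - x ^ 2 = p at *
  generalize X - c ^ 2 * x ^ 2 = q at *
  field_simp
  rw [hS2]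
  ring

theorem wkbPhase_neg (c X x : ℝ) : wkbPhase c X (-x) = -wkbPhase c X x := by
  have hodd := intervalIntegral.integral_comp_neg (a := 0) (b := arcsin x)
    fun u : ℝ => √(X - c ^ 2 * sin u ^ 2)
  simp only [sin_neg, neg_zero, neg_sq] at hodd
  rw [wkbPhase, wkbPhase, arcsin_neg, hodd, intervalIntegral.integral_symm]

theorem continuous_wkbPhase (c X : ℝ) : Continuous (wkbPhase c X) :=
  (intervalIntegral.continuous_primitive
    (fun a b => (by fun_prop : Continuous fun u : ℝ =>
      √(X - c ^ 2 * sin u ^ 2)).intervalIntegrable a b) 0).comp continuous_arcsin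

theorem monotone_wkbPhase (c X : ℝ) : Monotone (wkbPhase c X) := by
  intro x y hxy
  have hcont : Continuous fun u : ℝ => √(X - c ^ 2 * sin u ^ 2) := by fun_prop
  rw [← sub_nonneg, wkbPhase, wkbPhase, intervalIntegral.integral_interval_sub_left
    (hcont.intervalIntegrable _ _) (hcont.intervalIntegrable _ _)]
  exact intervalIntegral.integral_nonneg (monotone_arcsin hxy) fun u _ => sqrt_nonneg _

theorem hasDerivAt_wkbPhase (c X : ℝ) (hx : x ∈ Ioo (-1 : ℝ) 1) :
    HasDerivAt (wkbPhase c X) (wkbWeight c X x / (1 - x ^ 2)) x := by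
  have hcont : Continuous fun u : ℝ => √(X - c ^ 2 * sin u ^ 2) := by fun_prop
  have hp := one_sub_sq_pos hx
  refine ((hcont.integral_hasStrictDerivAt 0 (arcsin x)).hasDerivAt.comp x
    (hasDerivAt_arcsin hx.1.ne' hx.2.ne)).congr_deriv ?_
  rw [sin_arcsin hx.1.le hx.2.le, wkbWeight, sqrt_mul hp.le, mul_one_div,
    div_eq_div_iff (sqrt_pos.2 hp).ne' hp.ne']
  linear_combination -√(X - c ^ 2 * x ^ 2) * mul_self_sqrt hp.le

theorem wkbPhase_one_eq_mul_integral {s : ℝ} (hc : 0 ≤ c) :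
    wkbPhase c (c ^ 2 * (1 + s)) 1 = c * ∫ u in (0 : ℝ)..π / 2, √(s + sin u ^ 2) := by
  have hcos : ∀ u : ℝ, √(c ^ 2 * (1 + s) - c ^ 2 * sin u ^ 2) = c * √(s + cos u ^ 2) := by
    intro u
    rw [cos_sq', ← sqrt_sq hc, ← sqrt_mul (sq_nonneg _), sqrt_sq hc]
    ring_nf
  simp only [wkbPhase, arcsin_one, hcos, intervalIntegral.integral_const_mul]
  have hrefl := intervalIntegral.integral_comp_sub_left (a := 0) (b := π / 2)
    (fun u : ℝ => √(s + sin u ^ 2)) (π / 2)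
  simpa only [sin_pi_div_two_sub, sub_self, sub_zero] using congrArg (c * ·) hrefl

end WKB

/-! ### Counting zeros with the modified Prüfer angle -/

/-- The tangent `K - S ψ / w` of the modified Prüfer angle of `ψ`, where `K`, `S` and `w` are the
Prüfer shift, the WKB weight and the flux. At zeros of the flux, where the angle is an odd multiple
of `π / 2`, division by zero gives it the meaningless value `K`. -/
noncomputable def pruferTangent (c X : ℝ) (ψ : ℝ → ℝ) (x : ℝ) : ℝ :=
  pruferShift c X x - wkbWeight c X x * (ψ x / prolateFlux ψ x)

namespace IsProlateSolution

variable {c χ X : ℝ} {ψ : ℝ → ℝ}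

theorem monotoneOn_arctan_pruferTangent_add_wkbPhase (h : IsProlateSolution c χ ψ)
    (hX : c ^ 2 < X) (hχ : χ ≤ X) {s : Set ℝ} (hs : Convex ℝ s) (hs_sub : s ⊆ Ioo (-1) 1)
    (hflux : ∀ x ∈ s, prolateFlux ψ x ≠ 0) :
    MonotoneOn (fun x => arctan (pruferTangent c X ψ x) + wkbPhase c X x) s := by
  have hderiv := fun x (hx : x ∈ s) =>
    hasDerivAt_prufer_angle (one_sub_sq_pos (hs_sub hx)).ne'
      (sub_mul_sq_pos hX (Ioo_subset_Icc_self (hs_sub hx))).ne' (wkbWeight_sq hX (hs_sub hx))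
      (hasDerivAt_wkbWeight hX (hs_sub hx)) (pruferShift_eq c X x)
      (hasDerivAt_pruferShift hX (hs_sub hx)) (hasDerivAt_wkbPhase c X (hs_sub hx))
      (h.hasDerivAt (hs_sub hx)) (h.hasDerivAt_flux (hs_sub hx)) (hflux x hx)
  refine monotoneOn_of_hasDerivWithinAt_nonneg hs
    (fun x hx => (hderiv x hx).continuousAt.continuousWithinAt)
    (fun x hx => (hderiv x (interior_subset hx)).hasDerivWithinAt) fun x hx => ?_
  have hx' := hs_sub (interior_subset hx)
  have hp := one_sub_sq_pos hx'
  have hq := sub_mul_sq_pos hX (Ioo_subset_Icc_self hx')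
  have hS := wkbWeight_pos hX hx'
  have hgap : 0 ≤ X - c ^ 2 * x ^ 2 - (χ - c ^ 2 * x ^ 2) := by linarith
  positivity

theorem strictMonoOn_of_flux_pos (h : IsProlateSolution c χ ψ) {z b : ℝ} (hz : -1 ≤ z)
    (hb : b ≤ 1) (hflux : ∀ x ∈ Ioo z b, 0 < prolateFlux ψ x) : StrictMonoOn ψ (Icc z b) := by
  refine strictMonoOn_of_hasDerivWithinAt_pos (convex_Icc z b)
    (h.continuousOn.mono (Icc_subset_Icc hz hb)) (f' := fun x => prolateFlux ψ x / (1 - x ^ 2))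
    (fun x hx => ?_) fun x hx => ?_ <;> rw [interior_Icc] at hx
  · exact (h.hasDerivAt (Ioo_subset_Ioo hz hb hx)).hasDerivWithinAt
  · exact div_pos (hflux x hx) (one_sub_sq_pos (Ioo_subset_Ioo hz hb hx))

theorem tendsto_pruferTangent_of_mem_Ioo (h : IsProlateSolution c χ ψ) (hX : c ^ 2 < X) {b : ℝ}
    (hb : b ∈ Ioo (-1 : ℝ) 1) (hψb : 0 < ψ b) (hfluxb : prolateFlux ψ b = 0)
    (hflux : ∀ᶠ x in 𝓝[<] b, 0 < prolateFlux ψ x) :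
    Tendsto (pruferTangent c X ψ) (𝓝[<] b) atBot := by
  have hflux_inv : Tendsto (fun x => (prolateFlux ψ x)⁻¹) (𝓝[<] b) atTop :=
    tendsto_inv_nhdsGT_zero.comp (tendsto_nhdsWithin_iff.2
      ⟨hfluxb ▸ (h.hasDerivAt_flux hb).continuousAt.continuousWithinAt, hflux⟩)
  have hSψ : Tendsto (fun x => wkbWeight c X x * ψ x) (𝓝[<] b) (𝓝 (wkbWeight c X b * ψ b)) :=
    (continuous_wkbWeight c X).continuousWithinAt.mul
      (h.hasDerivAt hb).continuousAt.continuousWithinAt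
  have hquot := hSψ.pos_mul_atTop (mul_pos (wkbWeight_pos hX hb) hψb) hflux_inv
  have hshift : ContinuousWithinAt (pruferShift c X) (Iio b) b :=
    (hasDerivAt_pruferShift hX hb).continuousAt.continuousWithinAt
  refine (hshift.tendsto.add_atBot (tendsto_neg_atTop_atBot.comp hquot)).congr fun x => ?_
  simp only [pruferTangent, Function.comp_apply]
  ring

theorem tendsto_flux_div_wkbWeight_sq (h : IsProlateSolution c χ ψ) (hX : c ^ 2 < X) :
    Tendsto (fun x => prolateFlux ψ x / wkbWeight c X x ^ 2) (𝓝[<] 1)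
      (𝓝 ((χ - c ^ 2) * ψ 1 / (2 * (X - c ^ 2)))) := by
  have hIoo : ∀ᶠ x in 𝓝[<] (1 : ℝ), x ∈ Ioo (-1 : ℝ) 1 := Ioo_mem_nhdsLT (by norm_num)
  have hprod : Continuous fun x : ℝ => (1 - x ^ 2) * (X - c ^ 2 * x ^ 2) := by fun_prop
  have hprod' : Tendsto
      (fun x : ℝ => -(2 * x) * (X - c ^ 2 * x ^ 2) + (1 - x ^ 2) * -(c ^ 2 * (2 * x)))
      (𝓝[<] 1) (𝓝 (-(2 * (X - c ^ 2)))) :=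
    tendsto_nhdsWithin_of_tendsto_nhds (Continuous.tendsto' (by fun_prop) _ _ (by ring))
  have hχψ : Tendsto (fun x => -((χ - c ^ 2 * x ^ 2) * ψ x)) (𝓝[<] 1)
      (𝓝 (-((χ - c ^ 2) * ψ 1))) :=
    ((tendsto_nhdsWithin_of_tendsto_nhds (Continuous.tendsto' (by fun_prop) _ _ (by ring))).mul
      h.tendsto_nhdsLT_one).neg
  have hne : -(2 * (X - c ^ 2)) ≠ 0 := by linarith
  have hlim := HasDerivAt.lhopital_zero_nhdsLT (hIoo.mono fun x hx => h.hasDerivAt_flux hx)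
    (.of_forall fun x => (hasDerivAt_one_sub_sq x).mul (hasDerivAt_sub_mul_sq c X x))
    (hprod'.eventually_ne hne) h.tendsto_flux_nhdsLT_one
    (tendsto_nhdsWithin_of_tendsto_nhds (hprod.tendsto' _ _ (by ring))) (hχψ.div hprod' hne)
  rw [neg_div_neg_eq] at hlim
  refine hlim.congr' ?_
  filter_upwards [hIoo] with x hx
  rw [wkbWeight_sq hX hx]
  rfl

end IsProlateSolution

theorem tendsto_wkbWeight_mul_pruferShift {c X : ℝ} (hX : c ^ 2 < X) :
    Tendsto (fun x => wkbWeight c X x * pruferShift c X x) (𝓝[<] 1) (𝓝 (1 / 2)) := by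
  have hXc : X - c ^ 2 ≠ 0 := by linarith
  have hcont : ContinuousAt (fun x : ℝ => x * ((X - c ^ 2 * x ^ 2) + c ^ 2 * (1 - x ^ 2)) /
      (2 * (X - c ^ 2 * x ^ 2))) 1 :=
    ContinuousAt.div (by fun_prop) (by fun_prop) (by simpa using hXc)
  have hlim := tendsto_nhdsWithin_of_tendsto_nhds (s := Iio 1) hcont.tendsto
  rw [show (1 : ℝ) * ((X - c ^ 2 * 1 ^ 2) + c ^ 2 * (1 - 1 ^ 2)) / (2 * (X - c ^ 2 * 1 ^ 2))
    = 1 / 2 by field_simp; ring] at hlim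
  refine hlim.congr' ?_
  filter_upwards [Ioo_mem_nhdsLT (by norm_num : (-1 : ℝ) < 1)] with x hx
  have hS := (wkbWeight_pos hX hx).ne'
  rw [pruferShift]
  field_simp

theorem tendsto_inv_wkbWeight {c X : ℝ} (hX : c ^ 2 < X) :
    Tendsto (fun x => (wkbWeight c X x)⁻¹) (𝓝[<] 1) atTop := by
  refine tendsto_inv_nhdsGT_zero.comp (tendsto_nhdsWithin_iff.2
    ⟨tendsto_nhdsWithin_of_tendsto_nhds ((continuous_wkbWeight c X).tendsto' _ _ ?_), ?_⟩)
  · simp [wkbWeight]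
  · filter_upwards [Ioo_mem_nhdsLT (by norm_num : (-1 : ℝ) < 1)] with x hx
      using wkbWeight_pos hX hx

namespace IsProlateSolution

variable {c χ X : ℝ} {ψ : ℝ → ℝ}

theorem tendsto_pruferTangent_one (h : IsProlateSolution c χ ψ) (hX : c ^ 2 < X) (hχ : χ ≤ X)
    (hψ1 : 0 < ψ 1) (hflux : ∀ᶠ x in 𝓝[<] 1, 0 < prolateFlux ψ x) :
    Tendsto (pruferTangent c X ψ) (𝓝[<] 1) atBot := by
  have hXc : 0 < X - c ^ 2 := sub_pos.2 hX
  have hratio : (χ - c ^ 2) * ψ 1 / (2 * (X - c ^ 2)) < ψ 1 := by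
    rw [div_lt_iff₀ (by positivity)]
    nlinarith [mul_pos hψ1 hXc]
  refine tendsto_atBot_mono' _ ?_
    ((tendsto_inv_wkbWeight hX).atTop_mul_const_of_neg (by norm_num : (-1 / 4 : ℝ) < 0))
  filter_upwards [(h.tendsto_flux_div_wkbWeight_sq hX).eventually_lt h.tendsto_nhdsLT_one hratio,
    (tendsto_wkbWeight_mul_pruferShift hX).eventually_lt_const (by norm_num : (1 / 2 : ℝ) < 3 / 4),
    hflux, Ioo_mem_nhdsLT (by norm_num : (-1 : ℝ) < 1)] with x hfluxψ hshift hflux_pos hx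
  have hS := wkbWeight_pos hX hx
  have hψ_ge : 1 ≤ wkbWeight c X x ^ 2 * (ψ x / prolateFlux ψ x) := by
    rw [div_lt_iff₀ (by positivity)] at hfluxψ
    rw [← mul_div_assoc, one_le_div hflux_pos]
    linarith
  rw [inv_mul_eq_div, le_div_iff₀ hS, pruferTangent]
  nlinarith

theorem pi_div_two_add_arctan_le_wkbPhase_sub (h : IsProlateSolution c χ ψ) (hX : c ^ 2 < X)
    (hχ : χ ≤ X) {z b : ℝ} (hz : z ∈ Ioo (-1 : ℝ) 1) (hψz : ψ z = 0) (hb : b ∈ Ioc z 1)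
    (hfluxb : prolateFlux ψ b = 0) (hflux : ∀ x ∈ Ico z b, 0 < prolateFlux ψ x) :
    π / 2 + arctan (pruferShift c X z) ≤ wkbPhase c X b - wkbPhase c X z := by
  have hψb : 0 < ψ b := hψz ▸ h.strictMonoOn_of_flux_pos hz.1.le hb.2
    (fun x hx => hflux x (Ioo_subset_Ico_self hx)) (left_mem_Icc.2 hb.1.le)
    (right_mem_Icc.2 hb.1.le) hb.1
  have hev : ∀ᶠ x in 𝓝[<] b, x ∈ Ioo z b := Ioo_mem_nhdsLT hb.1
  have hflux_ev : ∀ᶠ x in 𝓝[<] b, 0 < prolateFlux ψ x :=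
    hev.mono fun x hx => hflux x (Ioo_subset_Ico_self hx)
  have hatBot : Tendsto (pruferTangent c X ψ) (𝓝[<] b) atBot := by
    rcases hb.2.eq_or_lt with rfl | hb1
    · exact h.tendsto_pruferTangent_one hX hχ hψb hflux_ev
    · exact h.tendsto_pruferTangent_of_mem_Ioo hX ⟨hz.1.trans hb.1, hb1⟩ hψb hfluxb hflux_ev
  have hlim : Tendsto (fun x => arctan (pruferTangent c X ψ x) + wkbPhase c X x) (𝓝[<] b)
      (𝓝 (-(π / 2) + wkbPhase c X b)) :=
    ((tendsto_arctan_atBot.mono_right nhdsWithin_le_nhds).comp hatBot).add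
      (continuous_wkbPhase c X).continuousWithinAt
  have hmono := h.monotoneOn_arctan_pruferTangent_add_wkbPhase hX hχ (convex_Ico z b)
    (fun x hx => ⟨hz.1.trans_le hx.1, hx.2.trans_le hb.2⟩) fun x hx => (hflux x hx).ne'
  have hle := ge_of_tendsto hlim (hev.mono fun x hx =>
    hmono (left_mem_Ico.2 hb.1) (Ioo_subset_Ico_self hx) hx.1.le)
  simp only [pruferTangent, hψz, zero_div, mul_zero, sub_zero] at hle
  linarith

theorem exists_pi_div_two_add_arctan_le_wkbPhase_sub (h : IsProlateSolution c χ ψ)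
    (hX : c ^ 2 < X) (hχ : χ ≤ X) {z : ℝ} (hz : z ∈ Ioo (-1 : ℝ) 1) (hψz : ψ z = 0)
    (hfluxz : 0 < prolateFlux ψ z) :
    ∃ b ∈ Ioc z 1, (∀ x ∈ Ico z b, 0 < prolateFlux ψ x) ∧
      π / 2 + arctan (pruferShift c X z) ≤ wkbPhase c X b - wkbPhase c X z := by
  obtain ⟨b, hb, hfluxb, hflux⟩ := exists_first_zero hz.2.le
    (h.continuousOn_flux.mono (Icc_subset_Icc_left hz.1.le)) hfluxz (prolateFlux_one ψ)
  exact ⟨b, hb, hflux, h.pi_div_two_add_arctan_le_wkbPhase_sub hX hχ hz hψz hb hfluxb hflux⟩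

/-- The contributions `± arctan (pruferShift c X z)` of the two halves cancel. -/
theorem exists_pi_le_wkbPhase_sub_of_flux_pos (h : IsProlateSolution c χ ψ)
    (hX : c ^ 2 < X) (hχ : χ ≤ X) {z : ℝ} (hz : z ∈ Ioo (-1 : ℝ) 1) (hψz : ψ z = 0)
    (hfluxz : 0 < prolateFlux ψ z) :
    ∃ a ∈ Ico (-1) z, ∃ b ∈ Ioc z 1, (∀ x ∈ Ioo a b, prolateFlux ψ x ≠ 0) ∧
      π ≤ wkbPhase c X b - wkbPhase c X a := by
  obtain ⟨b, hb, hflux_right, hright⟩ :=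
    h.exists_pi_div_two_add_arctan_le_wkbPhase_sub hX hχ hz hψz hfluxz
  obtain ⟨a, ha, hflux_left, hleft⟩ :=
    h.neg_comp_neg.exists_pi_div_two_add_arctan_le_wkbPhase_sub hX hχ
      (neg_mem_Ioo_neg_one_one hz) (by simp [hψz])
      (by simpa [prolateFlux_neg_comp_neg] using hfluxz)
  simp only [prolateFlux_neg_comp_neg] at hflux_left
  refine ⟨-a, ⟨neg_le_neg ha.2, neg_lt.1 ha.1⟩, b, hb, fun x hx => ?_, ?_⟩
  · rcases le_or_gt z x with hzx | hxz
    · exact (hflux_right x ⟨hzx, hx.2⟩).ne'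
    · simpa using (hflux_left (-x) ⟨neg_le_neg hxz.le, neg_lt.1 hx.1⟩).ne'
  · rw [pruferShift_neg, arctan_neg, wkbPhase_neg] at hleft
    rw [wkbPhase_neg]
    linarith

theorem exists_pi_le_wkbPhase_sub_of_eq_zero (h : IsProlateSolution c χ ψ)
    (hX : c ^ 2 < X) (hχ : χ ≤ X) (hne : ∃ x ∈ Ioo (-1 : ℝ) 1, ψ x ≠ 0)
    {z : ℝ} (hz : z ∈ Ioo (-1 : ℝ) 1) (hψz : ψ z = 0) :
    ∃ a ∈ Ico (-1) z, ∃ b ∈ Ioc z 1, (∀ x ∈ Ioo a b, prolateFlux ψ x ≠ 0) ∧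
      π ≤ wkbPhase c X b - wkbPhase c X a := by
  rcases (h.flux_ne_zero_of_eq_zero hne hz hψz).lt_or_gt with hneg | hpos
  · simpa [prolateFlux_neg] using h.neg.exists_pi_le_wkbPhase_sub_of_flux_pos hX hχ hz
      (neg_eq_zero.2 hψz) (by simpa [prolateFlux_neg] using hneg)
  · exact h.exists_pi_le_wkbPhase_sub_of_flux_pos hX hχ hz hψz hpos

theorem exists_flux_eq_zero_between (h : IsProlateSolution c χ ψ) {s t : ℝ} (hs : -1 < s)
    (hst : s < t) (ht : t < 1) (hψs : ψ s = 0) (hψt : ψ t = 0) :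
    ∃ e ∈ Ioo s t, prolateFlux ψ e = 0 := by
  have hsub : Icc s t ⊆ Ioo (-1) 1 := Icc_subset_Ioo hs ht
  obtain ⟨e, he, hderiv⟩ := exists_hasDerivAt_eq_zero hst
    (h.continuousOn.mono (hsub.trans Ioo_subset_Icc_self)) (hψs.trans hψt.symm)
    fun x hx => h.hasDerivAt (hsub (Ioo_subset_Icc_self hx))
  exact ⟨e, he, (div_eq_zero_iff.1 hderiv).resolve_right
    (one_sub_sq_pos (hsub (Ioo_subset_Icc_self he))).ne'⟩

theorem card_zeros_mul_pi_le (h : IsProlateSolution c χ ψ) (hX : c ^ 2 < X) (hχ : χ ≤ X)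
    (hne : ∃ x ∈ Ioo (-1 : ℝ) 1, ψ x ≠ 0) {T : Finset ℝ}
    (hT : ∀ t ∈ T, t ∈ Ioo (-1 : ℝ) 1 ∧ ψ t = 0) : T.card * π ≤ 2 * wkbPhase c X 1 := by
  choose! A hA B hB hflux hπ using fun t ht =>
    h.exists_pi_le_wkbPhase_sub_of_eq_zero hX hχ hne (hT t ht).1 (hT t ht).2
  have hsep : ∀ s ∈ T, ∀ t ∈ T, s < t → B s ≤ A t := by
    intro s hs t ht hst
    obtain ⟨e, he, hfluxe⟩ := h.exists_flux_eq_zero_between (hT s hs).1.1 hst (hT t ht).1.2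
      (hT s hs).2 (hT t ht).2
    have hBe : B s ≤ e := not_lt.1 fun heB => hflux s hs e ⟨(hA s hs).2.trans he.1, heB⟩ hfluxe
    have heA : e ≤ A t := not_lt.1 fun hAe => hflux t ht e ⟨hAe, he.2.trans (hB t ht).1⟩ hfluxe
    exact hBe.trans heA
  calc T.card * π = ∑ _t ∈ T, π := by rw [Finset.sum_const, nsmul_eq_mul]
    _ ≤ ∑ t ∈ T, (wkbPhase c X (B t) - wkbPhase c X (A t)) := Finset.sum_le_sum hπ
    _ ≤ wkbPhase c X 1 - wkbPhase c X (-1) :=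
      sum_sub_le_of_monotone (monotone_wkbPhase c X) T (fun t ht => (hA t ht).1) hsep
        (by norm_num) fun t ht => (hB t ht).2
    _ = 2 * wkbPhase c X 1 := by rw [wkbPhase_neg]; ring

end IsProlateSolution

/-! ### An elliptic integral -/

section EllipticIntegral

variable {s : ℝ}

/-- Every term on the right has an elementary primitive. The bound is `(1 - cos u) √(s + sin² u)`
estimated by AM-GM on `sin u * √(s + sin² u)`, with weights making it sharp at `sin u = 1`. -/
theorem sqrt_add_sin_sq_le (hs : 0 ≤ s) {u : ℝ} (hu : u ∈ Icc 0 (π / 2)) :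
    √(s + sin u ^ 2) ≤ cos u * √(s + sin u ^ 2)
      + ((2 + s) * (sin u * (1 - cos u)) + s * (sin u / (1 + cos u))) / (2 * √(1 + s)) := by
  have hsin : 0 ≤ sin u := sin_nonneg_of_mem_Icc ⟨hu.1, hu.2.trans (by linarith [pi_pos])⟩
  have hcos : 0 ≤ cos u := cos_nonneg_of_mem_Icc ⟨by linarith [hu.1, pi_pos], hu.2⟩
  have hsin_sq : sin u ^ 2 = (1 - cos u) * (1 + cos u) := by rw [sin_sq]; ring
  have hR_sq : √(s + sin u ^ 2) ^ 2 = s + sin u ^ 2 := sq_sqrt (by positivity)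
  have hr_sq : √(1 + s) ^ 2 = 1 + s := sq_sqrt (by linarith)
  have hamgm : sin u * √(s + sin u ^ 2) ≤ ((2 + s) * sin u ^ 2 + s) / (2 * √(1 + s)) := by
    rw [le_div_iff₀ (by positivity)]
    nlinarith [sq_nonneg (√(1 + s) * sin u - √(s + sin u ^ 2))]
  have hdefect : (1 - cos u) * √(s + sin u ^ 2)
      ≤ sin u / (1 + cos u) * (((2 + s) * sin u ^ 2 + s) / (2 * √(1 + s))) := by
    calc (1 - cos u) * √(s + sin u ^ 2)
        = sin u / (1 + cos u) * (sin u * √(s + sin u ^ 2)) := by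
          field_simp
          linear_combination -√(s + sin u ^ 2) * hsin_sq
      _ ≤ _ := by gcongr
  have hexpand : sin u / (1 + cos u) * (((2 + s) * sin u ^ 2 + s) / (2 * √(1 + s)))
      = ((2 + s) * (sin u * (1 - cos u)) + s * (sin u / (1 + cos u))) / (2 * √(1 + s)) := by
    rw [hsin_sq]
    field_simp
  linarith

theorem hasDerivAt_half_sin_mul_sqrt_add_log (hs : 0 < s) (u : ℝ) :
    HasDerivAt
      (fun u => (sin u * √(s + sin u ^ 2) + s * log (sin u + √(s + sin u ^ 2))) / 2)
      (cos u * √(s + sin u ^ 2)) u := by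
  have hR_sq : √(s + sin u ^ 2) ^ 2 = s + sin u ^ 2 := sq_sqrt (by positivity)
  have hR : 0 < √(s + sin u ^ 2) := sqrt_pos.2 (by positivity)
  have hsum : 0 < sin u + √(s + sin u ^ 2) := by
    nlinarith [abs_lt_of_sq_lt_sq (by linarith : sin u ^ 2 < √(s + sin u ^ 2) ^ 2) hR.le,
      neg_abs_le (sin u)]
  have hsqrt := (((hasDerivAt_sin u).fun_pow 2).const_add s).sqrt (by positivity)
  refine ((((hasDerivAt_sin u).mul hsqrt).add
    (((hasDerivAt_sin u).fun_add hsqrt).log hsum.ne' |>.const_mul s)).div_const 2).congr_deriv ?_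
  generalize √(s + sin u ^ 2) = R at *
  rw [← sub_eq_iff_eq_add] at hR_sq
  rw [← hR_sq]
  field_simp
  ring

theorem hasDerivAt_neg_cos_sub_half_sin_sq (u : ℝ) :
    HasDerivAt (fun u => -cos u - sin u ^ 2 / 2) (sin u * (1 - cos u)) u := by
  refine ((hasDerivAt_cos u).neg.sub (((hasDerivAt_sin u).fun_pow 2).div_const 2)).congr_deriv ?_
  push_cast
  ring

theorem hasDerivAt_neg_log_one_add_cos {u : ℝ} (hu : 1 + cos u ≠ 0) :
    HasDerivAt (fun u => -log (1 + cos u)) (sin u / (1 + cos u)) u :=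
  (((hasDerivAt_cos u).const_add 1).log hu).neg.congr_deriv (by ring)

theorem integral_sqrt_add_sin_sq_le (hs : 0 < s) :
    ∫ u in (0 : ℝ)..π / 2, √(s + sin u ^ 2) ≤
      √(1 + s) / 2 + s / 2 * (log (1 + √(1 + s)) - log s / 2)
        + ((2 + s) / 2 + s * log 2) / (2 * √(1 + s)) := by
  have hcos : ∀ u ∈ Icc 0 (π / 2), 1 + cos u ≠ 0 := fun u hu =>
    (add_pos_of_pos_of_nonneg one_pos
      (cos_nonneg_of_mem_Icc ⟨by linarith [hu.1, pi_pos], hu.2⟩)).ne'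
  have hderiv := fun u (hu : u ∈ Icc 0 (π / 2)) =>
    (hasDerivAt_half_sin_mul_sqrt_add_log hs u).add
      ((((hasDerivAt_neg_cos_sub_half_sin_sq u).const_mul (2 + s)).add
        ((hasDerivAt_neg_log_one_add_cos (hcos u hu)).const_mul s)).div_const (2 * √(1 + s)))
  have hcont : Continuous fun u : ℝ => √(s + sin u ^ 2) := by fun_prop
  refine (intervalIntegral.integral_le_sub_of_hasDeriv_right_of_le pi_div_two_pos.le
    (fun u hu => (hderiv u hu).continuousAt.continuousWithinAt)
    (fun u hu => (hderiv u (Ioo_subset_Icc_self hu)).hasDerivWithinAt)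
    hcont.continuousOn.integrableOn_Icc
    fun u hu => sqrt_add_sin_sq_le hs.le (Ioo_subset_Icc_self hu)).trans_eq ?_
  simp only [Pi.add_apply, sin_zero, cos_zero, sin_pi_div_two, cos_pi_div_two, log_one, zero_pow,
    log_sqrt hs.le, add_comm s, one_add_one_eq_two, one_pow, ne_eq, OfNat.ofNat_ne_zero,
    not_false_eq_true, add_zero, zero_add]
  ring

theorem log_one_add_le {r : ℝ} (hr : -1 < r) : log (1 + r) ≤ log 2 + (r - 1) / 2 := by
  have hlog := log_le_sub_one_of_pos (by linarith : 0 < (1 + r) / 2)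
  rw [log_div (by linarith) two_ne_zero] at hlog
  linarith

theorem log_sixteen_div (hs : 0 < s) : log (16 / s) = 4 * log 2 - log s := by
  rw [log_div (by norm_num) hs.ne', show (16 : ℝ) = 2 ^ 4 by norm_num, log_pow]
  norm_num

theorem integral_sqrt_add_sin_sq_le_of_le_one (hs : 0 < s) (hs1 : s ≤ 1) :
    ∫ u in (0 : ℝ)..π / 2, √(s + sin u ^ 2) ≤ 1 + s / 4 + s / 4 * log (16 / s) := by
  refine (integral_sqrt_add_sin_sq_le hs).trans ?_
  obtain ⟨r, hr, hr1⟩ : ∃ r, √(1 + s) = r ∧ 1 ≤ r := ⟨_, rfl, one_le_sqrt.2 (by linarith)⟩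
  have hsr : s = r ^ 2 - 1 := by rw [← hr, sq_sqrt (by linarith)]; ring
  have hr_le : r ≤ 1.42 := by nlinarith
  have hbracket : 0 ≤ 2 * (r + 1) * log 2 - r ^ 2 - 1 := by nlinarith [log_two_gt_d9]
  have hlog : s / 2 * log (1 + r) ≤ s / 2 * (log 2 + (r - 1) / 2) := by
    gcongr
    exact log_one_add_le (by linarith)
  have hgap : 0 ≤ (r - 1) ^ 2 / (4 * r) * (2 * (r + 1) * log 2 - r ^ 2 - 1) := by positivity
  have hidentity : 1 + s / 4 + s / 4 * (4 * log 2)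
      - (r / 2 + s / 2 * (log 2 + (r - 1) / 2) + ((2 + s) / 2 + s * log 2) / (2 * r))
      = (r - 1) ^ 2 / (4 * r) * (2 * (r + 1) * log 2 - r ^ 2 - 1) := by
    rw [hsr]
    field_simp
    ring
  rw [hr, log_sixteen_div hs]
  linarith

theorem integral_sqrt_add_sin_sq_le_pi_div_two_mul (hs : 0 ≤ s) :
    ∫ u in (0 : ℝ)..π / 2, √(s + sin u ^ 2) ≤ π / 2 * √(s + 1 / 2) := by
  have hw_sq : √(s + 1 / 2) ^ 2 = s + 1 / 2 := sq_sqrt (by linarith)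
  -- Jensen: the tangent line of the square root at the mean value `1 / 2` of `sin² u`.
  have htangent : ∀ u : ℝ, √(s + sin u ^ 2)
      ≤ √(s + 1 / 2) + (sin u ^ 2 - 1 / 2) / (2 * √(s + 1 / 2)) := by
    intro u
    have hR_sq : √(s + sin u ^ 2) ^ 2 = s + sin u ^ 2 := sq_sqrt (by positivity)
    rw [← sub_le_iff_le_add', le_div_iff₀ (by positivity)]
    nlinarith [sq_nonneg (√(s + sin u ^ 2) - √(s + 1 / 2))]
  have hmean : ∫ u in (0 : ℝ)..π / 2, (sin u ^ 2 - 1 / 2) = 0 := by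
    rw [intervalIntegral.integral_sub (Continuous.intervalIntegrable (by fun_prop) _ _) (by simp),
      integral_sin_sq, intervalIntegral.integral_const]
    simp only [sin_zero, zero_mul, cos_pi_div_two, mul_zero, smul_eq_mul]
    ring
  calc ∫ u in (0 : ℝ)..π / 2, √(s + sin u ^ 2)
      ≤ ∫ u in (0 : ℝ)..π / 2, (√(s + 1 / 2) + (sin u ^ 2 - 1 / 2) / (2 * √(s + 1 / 2))) :=
        intervalIntegral.integral_mono_on pi_div_two_pos.le
          (Continuous.intervalIntegrable (by fun_prop) _ _)
          (Continuous.intervalIntegrable (by fun_prop) _ _) fun u _ => htangent u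
    _ = π / 2 * √(s + 1 / 2) := by
        rw [intervalIntegral.integral_add (by simp)
          (Continuous.intervalIntegrable (by fun_prop) _ _), intervalIntegral.integral_div, hmean,
          intervalIntegral.integral_const, sub_zero, smul_eq_mul, zero_div, add_zero]

theorem pi_div_mul_sqrt_le_one_div (hs : 0 < s) :
    π / (8 * (s + 1 / 2) * √(s + 1 / 2)) ≤ 1 / (4 * s) := by
  have ht : 0 < √(s + 1 / 2) := sqrt_pos.2 (by linarith)
  have ht_sq : √(s + 1 / 2) ^ 2 = s + 1 / 2 := sq_sqrt (by linarith)
  generalize √(s + 1 / 2) = t at *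
  rw [← ht_sq, div_le_div_iff₀ (by positivity) (by positivity)]
  nlinarith [mul_nonneg (sq_nonneg (t - 1.05)) (by linarith : 0 ≤ t + 0.525),
    mul_lt_mul_of_pos_right pi_lt_d2 hs]

theorem hasDerivAt_mul_sub_log (a : ℝ) (hs : s ≠ 0) :
    HasDerivAt (fun s => s * (a - log s)) (a - log s - 1) s := by
  refine ((hasDerivAt_id s).mul ((hasDerivAt_log hs).const_sub a)).congr_deriv ?_
  simp only [id]
  field_simp
  ring

theorem concaveOn_mul_sub_log_sub_pi_mul_sqrt (a : ℝ) :
    ConcaveOn ℝ (Ioi 0) fun s => s * (a - log s) / 4 - π / 2 * √(s + 1 / 2) := by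
  have hsqrt : ∀ s : ℝ, 0 < s → HasDerivAt (fun s => √(s + 1 / 2)) (1 / (2 * √(s + 1 / 2))) s :=
    fun s hs => ((hasDerivAt_id s).add_const (1 / 2)).sqrt (by simp only [id]; linarith)
  have hsqrt_ne : ∀ s : ℝ, 0 < s → √(s + 1 / 2) ≠ 0 := fun s hs =>
    (sqrt_pos.2 (by linarith)).ne'
  have hderiv : ∀ s : ℝ, 0 < s → HasDerivAt
      (fun s => s * (a - log s) / 4 - π / 2 * √(s + 1 / 2))
      ((a - log s - 1) / 4 - π / 4 * (√(s + 1 / 2))⁻¹) s := fun s hs =>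
    (((hasDerivAt_mul_sub_log a hs.ne').div_const 4).sub ((hsqrt s hs).const_mul _)).congr_deriv
      (by field_simp [hsqrt_ne s hs]; ring)
  have hderiv2 : ∀ s : ℝ, 0 < s → HasDerivAt
      (fun s => (a - log s - 1) / 4 - π / 4 * (√(s + 1 / 2))⁻¹)
      (π / (8 * (s + 1 / 2) * √(s + 1 / 2)) - 1 / (4 * s)) s := by
    intro s hs
    refine (((((hasDerivAt_log hs.ne').const_sub a).sub_const 1).div_const 4).sub
      (((hsqrt s hs).inv (hsqrt_ne s hs)).const_mul (π / 4))).congr_deriv ?_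
    rw [sq_sqrt (by linarith)]
    field_simp [hsqrt_ne s hs]
    ring
  refine concaveOn_of_hasDerivWithinAt2_nonpos (convex_Ioi 0)
    (fun s hs => (hderiv s hs).continuousAt.continuousWithinAt)
    (fun s hs => (hderiv s (interior_subset hs)).hasDerivWithinAt)
    (fun s hs => (hderiv2 s (interior_subset hs)).hasDerivWithinAt) fun s hs => ?_
  exact sub_nonpos.2 (pi_div_mul_sqrt_le_one_div (interior_subset hs))

theorem pi_div_two_mul_sqrt_le (hs1 : 1 ≤ s) (hs5 : s ≤ 5) :
    π / 2 * √(s + 1 / 2) ≤ 1 + s / 4 + s / 4 * log (16 / s) := by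
  have hmin := (concaveOn_mul_sub_log_sub_pi_mul_sqrt (1 + 4 * log 2)).min_le_of_mem_Icc
    (mem_Ioi.2 one_pos) (mem_Ioi.2 (by norm_num)) ⟨hs1, hs5⟩
  have hone : -1 ≤ 1 * (1 + 4 * log 2 - log 1) / 4 - π / 2 * √(1 + 1 / 2) := by
    have hsqrt : √(1 + 1 / 2 : ℝ) ≤ 1.2248 := sqrt_le_iff.2 (by norm_num)
    rw [log_one]
    nlinarith [pi_lt_d4, pi_pos, log_two_gt_d9]
  have hfive : -1 ≤ 5 * (1 + 4 * log 2 - log 5) / 4 - π / 2 * √(5 + 1 / 2) := by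
    have hsqrt : √(5 + 1 / 2 : ℝ) ≤ 2.3453 := sqrt_le_iff.2 (by norm_num)
    have hlog : 3 * log 5 ≤ 7 * log 2 := by
      have hlog_pow := log_le_log (by norm_num) (by norm_num : (5 : ℝ) ^ 3 ≤ 2 ^ 7)
      rwa [log_pow, log_pow] at hlog_pow
    nlinarith [pi_lt_d4, pi_pos, log_two_gt_d9]
  rw [log_sixteen_div (by linarith)]
  linarith [(le_min hone hfive).trans hmin]

theorem integral_sqrt_add_sin_sq_le_of_le_five (hs : 0 < s) (hs5 : s ≤ 5) :
    ∫ u in (0 : ℝ)..π / 2, √(s + sin u ^ 2) ≤ 1 + s / 4 + s / 4 * log (16 / s) := by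
  rcases le_total s 1 with hs1 | hs1
  · exact integral_sqrt_add_sin_sq_le_of_le_one hs hs1
  · exact (integral_sqrt_add_sin_sq_le_pi_div_two_mul hs.le).trans (pi_div_two_mul_sqrt_le hs1 hs5)

end EllipticIntegral

/-! ### The eigenvalue bound -/

theorem IsProlateSolution.sq_mul_one_add_lt_of_card_zeros {c χ s : ℝ} {ψ : ℝ → ℝ}
    (h : IsProlateSolution c χ ψ) (hc : 0 < c) (hs : 0 < s) (hs5 : s ≤ 5)
    (hne : ∃ x ∈ Ioo (-1 : ℝ) 1, ψ x ≠ 0) {T : Finset ℝ}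
    (hT : ∀ t ∈ T, t ∈ Ioo (-1 : ℝ) 1 ∧ ψ t = 0)
    (hcard : 2 * c * (1 + s / 4 + s / 4 * log (16 / s)) < T.card * π) :
    c ^ 2 * (1 + s) < χ := by
  by_contra! hχ
  have hX : c ^ 2 < c ^ 2 * (1 + s) := lt_mul_of_one_lt_right (by positivity) (by linarith)
  refine hcard.not_ge ?_
  calc T.card * π ≤ 2 * wkbPhase c (c ^ 2 * (1 + s)) 1 := h.card_zeros_mul_pi_le hX hχ hne hT
    _ = 2 * c * ∫ u in (0 : ℝ)..π / 2, √(s + sin u ^ 2) := by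
      rw [wkbPhase_one_eq_mul_integral hc.le, mul_assoc]
    _ ≤ 2 * c * (1 + s / 4 + s / 4 * log (16 / s)) := by
      gcongr
      exact integral_sqrt_add_sin_sq_le_of_le_five hs hs5

theorem zero_count_bound_mul_pi {c δ : ℝ} (hc : 0 < c) (hδ : 0 < δ) :
    (2 * c / π + 2 / π ^ 2 * δ * log (4 * exp 1 * π * c / δ)) * π =
      2 * c * (1 + 4 * δ / (π * c) / 4
        + 4 * δ / (π * c) / 4 * log (16 / (4 * δ / (π * c)))) := by
  have harg : 4 * exp 1 * π * c / δ = exp 1 * (16 / (4 * δ / (π * c))) := by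
    field_simp
    norm_num
  rw [harg, log_mul (exp_pos 1).ne' (by positivity), log_exp]
  field_simp
  ring

namespace IsPSWF

variable {c χ : ℝ} {n : ℕ} {ψ : ℝ → ℝ} {lam : ℂ}

theorem isProlateSolution (h : IsPSWF c n ψ χ lam) : IsProlateSolution c χ ψ :=
  ⟨h.1, fun x hx => (h.2.1 x hx).1, fun x hx => (h.2.1 x hx).2, h.2.2.1⟩

theorem exists_ne_zero (h : IsPSWF c n ψ χ lam) : ∃ x ∈ Ioo (-1 : ℝ) 1, ψ x ≠ 0 := by
  by_contra! hzero
  exact Ioo_infinite (by norm_num : (-1 : ℝ) < 1)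
    (h.2.2.2.1.subset fun x hx => ⟨hx, hzero x hx⟩)

theorem encard_zeros (h : IsPSWF c n ψ χ lam) :
    {x | x ∈ Ioo (-1 : ℝ) 1 ∧ ψ x = 0}.encard = n := by
  rw [← h.2.2.2.1.cast_ncard_eq, h.2.2.2.2.1]

end IsPSWF

theorem stmt6_general {c : ℝ} (hc : 0 < c) {δ : ℝ} (hδ1 : 0 < δ) (hδ2 : δ < 5 * π / 4 * c)
    {n : ℕ} (hnlow : (n : ℝ) > 2 * c / π + 2 / π ^ 2 * δ * log (4 * exp 1 * π * c / δ))
    {ψ : ℝ → ℝ} {χ : ℝ} (h : IsProlateSolution c χ ψ) (hne : ∃ x ∈ Ioo (-1 : ℝ) 1, ψ x ≠ 0)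
    (hn : n ≤ {x | x ∈ Ioo (-1 : ℝ) 1 ∧ ψ x = 0}.encard) :
    χ > c ^ 2 + 4 / π * δ * c := by
  obtain ⟨Z, hZ, hZn⟩ := exists_subset_encard_eq hn
  lift Z to Finset ℝ using finite_of_encard_eq_coe hZn with T
  have hTn : T.card = n := by rwa [encard_coe_eq_coe_finsetCard, Nat.cast_inj] at hZn
  have hs5 : 4 * δ / (π * c) ≤ 5 := by
    rw [div_le_iff₀ (by positivity)]
    linarith
  have hcard := mul_lt_mul_of_pos_right hnlow pi_pos
  rw [zero_count_bound_mul_pi hc hδ1, ← hTn] at hcard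
  have hχ := h.sq_mul_one_add_lt_of_card_zeros hc (by positivity) hs5 hne
    (fun t ht => hZ ht) hcard
  convert hχ using 1
  field_simp

theorem stmt6 (c : ℝ) (hc : 0 < c) (δ : ℝ) (hδ1 : 0 < δ) (hδ2 : δ < 5 * π / 4 * c)
    (n : ℕ) (hn : 0 < n)
    (hnlow : (n : ℝ) > 2 * c / π + 2 / π ^ 2 * δ * Real.log (4 * Real.exp 1 * π * c / δ))
    (ψ : ℝ → ℝ) (χ : ℝ) (lam : ℂ)
    (hpswf : IsPSWF c n ψ χ lam) :
    χ > c ^ 2 + 4 / π * δ * c :=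
  stmt6_general hc hδ1 hδ2 hnlow hpswf.isProlateSolution hpswf.exists_ne_zero
    hpswf.encard_zeros.ge
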